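/- arXiv:0811.3072 — 2 statements merged into one kernel-verified Lean document; each statement's English description precedes it below -/
import Mathlib

section
/- Let k ≥ 1, i = (i_1,…,i_k) ∈ Ω^k, j ∈ ℤ⁺ and n = N^j. Then P_n S_i^* P_n S_i P_n equals 0 if j < k and N^j ≤ v_{i,k}; equals P_1 if j < k and N^j > v_{i,k}; and equals P_{N^{j−k}} if j ≥ k. -/
theorem aux_prod {H : Type*} [NormedAddCommGroup H] [InnerProductSpace ℂ H] [CompleteSpace H]
    (e : HilbertBasis ℕ ℂ H) (N : ℕ)
    (S : Fin N → H →L[ℂ] H)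
    (hS : ∀ (i : Fin N) (r : ℕ), S i (e r) = e (r * N + (i : ℕ)))
    (k : ℕ) : ∀ (i : Fin k → Fin N) (r : ℕ),
    (List.ofFn fun t => S (i t)).prod (e r)
      = e (r * N ^ k + ∑ t : Fin k, (i t : ℕ) * N ^ (t : ℕ)) := by
  induction k with
  | zero => intro i r; simp
  | succ k ih =>
    intro i r
    rw [List.ofFn_succ, List.prod_cons, ContinuousLinearMap.mul_apply,
      ih (fun t => i t.succ) r, hS, Fin.sum_univ_succ]
    congr 1
    simp only [Fin.val_succ, Fin.val_zero, pow_zero, mul_one, pow_succ, add_mul, Finset.sum_mul,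
      mul_assoc]
    ring

theorem aux_lt (N : ℕ) (k : ℕ) : ∀ (i : Fin k → Fin N),
    ∑ t : Fin k, (i t : ℕ) * N ^ (t : ℕ) < N ^ k := by
  induction k with
  | zero => intro i; simp
  | succ k ih =>
    intro i
    rw [Fin.sum_univ_castSucc]
    have h1 := ih (fun t => i t.castSucc)
    have h2 := (i (Fin.last k)).isLt
    simp only [Fin.val_castSucc, Fin.val_last]
    have h3 : ((i (Fin.last k) : ℕ) + 1) * N ^ k ≤ N * N ^ k := Nat.mul_le_mul_right _ h2
    rw [pow_succ']
    linarith

/-- Let `k ≥ 1`, `i ∈ Ω^k`, `j ∈ ℤ⁺` and `n = N^j`. Then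
`Pₙ S_i* Pₙ S_i Pₙ` equals `0` if `j < k` and `N^j ≤ v_{i,k}`; equals `P 1` if `j < k` and
`N^j > v_{i,k}`; and equals `P (N^(j-k))` if `j ≥ k`. -/
theorem stmt7 {H : Type*} [NormedAddCommGroup H] [InnerProductSpace ℂ H] [CompleteSpace H]
    (e : HilbertBasis ℕ ℂ H) (N : ℕ) (hN : 2 ≤ N)
    (S : Fin N → H →L[ℂ] H)
    (hS : ∀ (i : Fin N) (r : ℕ), S i (e r) = e (r * N + (i : ℕ)))
    (P : ℕ → H →L[ℂ] H)
    (hP : ∀ n k : ℕ, P n (e k) = if k < n then e k else 0)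
    (k : ℕ) (hk : 1 ≤ k) (i : Fin k → Fin N) (j : ℕ) :
    P (N ^ j) * star ((List.ofFn fun t => S (i t)).prod) * P (N ^ j) *
        (List.ofFn fun t => S (i t)).prod * P (N ^ j)
      = if j < k then
          (if N ^ j ≤ ∑ t : Fin k, (i t : ℕ) * N ^ (t : ℕ) then 0 else P 1)
        else P (N ^ (j - k)) := by
  have hv := aux_lt N k i
  have hA := aux_prod e N S hS k i
  generalize (List.ofFn fun t => S (i t)).prod = A at *
  generalize (∑ t : Fin k, (i t : ℕ) * N ^ (t : ℕ)) = v at *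
  have hNk : 0 < N ^ k := by positivity
  have hstar : ∀ r, star A (e (r * N ^ k + v)) = e r := by
    intro r
    apply e.repr.injective
    ext m
    rw [e.repr_apply_apply, e.repr_apply_apply, ContinuousLinearMap.star_eq_adjoint,
      ContinuousLinearMap.adjoint_inner_right, hA,
      orthonormal_iff_ite.mp e.orthonormal, orthonormal_iff_ite.mp e.orthonormal]
    have : (m * N ^ k + v = r * N ^ k + v) ↔ m = r := by
      constructor
      · intro h
        exact Nat.eq_of_mul_eq_mul_right hNk (Nat.add_right_cancel h)
      · rintro rfl; rfl
    simp only [this]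
  have hL : ∀ r, (P (N ^ j) * star A * P (N ^ j) * A * P (N ^ j)) (e r)
      = if r * N ^ k + v < N ^ j then e r else 0 := by
    intro r
    have hr : r ≤ r * N ^ k := Nat.le_mul_of_pos_right _ hNk
    simp only [ContinuousLinearMap.mul_apply]
    rw [hP]
    split_ifs with h1 h2 h2
    · rw [hA, hP, if_pos h2, hstar, hP, if_pos h1]
    · rw [hA, hP, if_neg h2, map_zero, map_zero]
    · omega
    · simp
  apply ContinuousLinearMap.ext_on
    (s := Set.range e) (Submodule.dense_iff_topologicalClosure_eq_top.mpr e.dense_span)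
  rintro _ ⟨r, rfl⟩
  rw [hL]
  split_ifs with h1 h2 h3 h2 h3
  · omega
  · rw [hP, if_pos]
    have : N ^ j ≤ N ^ k := Nat.pow_le_pow_right (by omega) h2.le
    by_contra h
    have : 1 * N ^ k ≤ r * N ^ k := Nat.mul_le_mul_right _ (by omega)
    omega
  · rw [hP, if_pos]
    have : N ^ j = N ^ (j - k) * N ^ k := by rw [← pow_add]; congr 1; omega
    rw [this] at h1
    exact Nat.lt_of_mul_lt_mul_right (a := N ^ k) (by omega)
  · simp
  · rw [hP, if_neg]
    intro h
    obtain rfl : r = 0 := by omega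
    omega
  · rw [hP, if_neg]
    intro h
    have h4 : N ^ j = N ^ (j - k) * N ^ k := by rw [← pow_add]; congr 1; omega
    have h5 : (r + 1) * N ^ k ≤ N ^ (j - k) * N ^ k := Nat.mul_le_mul_right _ h
    rw [add_mul] at h5
    omega
end

section
/- The ideal G_η of norm-null sequences is contained in S_η(O_N), i.e. every sequence (A_n)_{n≥0} of complex N^n×N^n matrices with ‖A_n‖ → 0 belongs to the smallest closed *-subalgebra of F_η containing all sequences (P_{N^n}AP_{N^n})_{n≥0} with A ∈ O_N. -/
open InnerProductSpace

theorem aux_ext {H : Type*} [NormedAddCommGroup H] [InnerProductSpace ℂ H]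
    (e : HilbertBasis ℕ ℂ H) {A B : H →L[ℂ] H} (h : ∀ k, A (e k) = B (e k)) : A = B := by
  apply ContinuousLinearMap.ext_on (s := Set.range e)
  · exact Submodule.dense_iff_topologicalClosure_eq_top.mpr e.dense_span
  · rintro _ ⟨k, rfl⟩
    exact h k

theorem aux_inner {H : Type*} [NormedAddCommGroup H] [InnerProductSpace ℂ H]
    (e : HilbertBasis ℕ ℂ H) (a b : ℕ) : inner ℂ (e a) (e b) = if a = b then (1 : ℂ) else 0 :=
  orthonormal_iff_ite.mp e.orthonormal a b

theorem aux_vec {H : Type*} [NormedAddCommGroup H] [InnerProductSpace ℂ H]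
    (e : HilbertBasis ℕ ℂ H) {x y : H} (h : ∀ k, inner ℂ (e k) x = inner ℂ (e k) y) : x = y := by
  apply e.repr.injective
  ext k
  rw [e.repr_apply_apply, e.repr_apply_apply, h]

theorem aux_starmul {H : Type*} [NormedAddCommGroup H] [InnerProductSpace ℂ H] [CompleteSpace H]
    (e : HilbertBasis ℕ ℂ H) (A : H →L[ℂ] H) (p : ℕ → Prop) [DecidablePred p] (g : ℕ → ℕ)
    (hg : Function.Injective g) (hA : ∀ r, A (e r) = if p r then e (g r) else 0) (r : ℕ) :
    (star A * A) (e r) = if p r then e r else 0 := by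
  apply aux_vec e
  intro s
  rw [ContinuousLinearMap.mul_apply, ContinuousLinearMap.star_eq_adjoint,
    ContinuousLinearMap.adjoint_inner_right, hA, hA]
  by_cases h1 : p r <;> by_cases h2 : p s <;> simp [h1, h2, aux_inner, hg.eq_iff]
  rintro rfl; exact h2 h1

theorem aux_P {H : Type*} [NormedAddCommGroup H] [InnerProductSpace ℂ H]
    (e : HilbertBasis ℕ ℂ H) (P : H →L[ℂ] H) (n : ℕ)
    (hP : ∀ k : ℕ, P (e k) = if k < n then e k else 0) :
    P = ∑ a ∈ Finset.range n, rankOne ℂ (e a) (e a) := by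
  apply aux_ext e
  intro k
  rw [hP, ContinuousLinearMap.sum_apply]
  simp [aux_inner]

theorem aux_Pnorm {H : Type*} [NormedAddCommGroup H] [InnerProductSpace ℂ H] [CompleteSpace H]
    (e : HilbertBasis ℕ ℂ H) (P : H →L[ℂ] H) (n : ℕ)
    (hP : ∀ k : ℕ, P (e k) = if k < n then e k else 0) : ‖P‖ ≤ 1 := by
  have h : star P * P = P := by
    apply aux_ext e
    intro k
    rw [aux_starmul e P (fun k => k < n) id Function.injective_id (by simpa using hP), hP]
  have h2 := CStarRing.norm_star_mul_self (x := P)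
  rw [h] at h2
  by_contra hc
  push Not at hc
  nlinarith

theorem aux_V {H : Type*} [NormedAddCommGroup H] [InnerProductSpace ℂ H] [CompleteSpace H]
    (e : HilbertBasis ℕ ℂ H) (N : ℕ) (hN : 2 ≤ N)
    (S : Fin N → H →L[ℂ] H)
    (hS : ∀ (i : Fin N) (r : ℕ), S i (e r) = e (r * N + (i : ℕ))) (k : ℕ) :
    ∀ c < N ^ k, ∃ V ∈ NonUnitalStarAlgebra.adjoin ℂ (Set.range S),
      ∀ r, V (e r) = e (r * N ^ k + c) := by
  have hm : ∀ i, S i ∈ NonUnitalStarAlgebra.adjoin ℂ (Set.range S) :=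
    fun i => NonUnitalStarAlgebra.subset_adjoin ℂ _ ⟨i, rfl⟩
  induction k with
  | zero =>
    intro c hc
    refine ⟨star (S ⟨0, by omega⟩) * S ⟨0, by omega⟩, mul_mem (star_mem (hm _)) (hm _), ?_⟩
    intro r
    rw [aux_starmul e _ (fun _ => True) (fun r => r * N)]
    · have : c = 0 := by simpa using hc
      simp [this]
    · intro a b hab
      exact Nat.eq_of_mul_eq_mul_right (by omega) hab
    · simp [hS]
  | succ k ih =>
    intro c hc
    obtain ⟨V, hV, hV2⟩ := ih (c / N) (by
      rw [Nat.div_lt_iff_lt_mul (by omega)]; rwa [pow_succ] at hc)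
    refine ⟨S ⟨c % N, Nat.mod_lt _ (by omega)⟩ * V, mul_mem (hm _) hV, ?_⟩
    intro r
    rw [ContinuousLinearMap.mul_apply, hV2, hS]
    congr 1
    have := Nat.div_add_mod c N
    simp only
    rw [pow_succ]
    nlinarith

theorem aux_arith (N n k r : ℕ) (hN : 2 ≤ N) :
    (r < N ^ n ∧ r * N ^ k + 0 < N ^ n) ↔
      ((r < N ^ n ∧ r * N ^ k + (N ^ k - 1) < N ^ n) ∨ (r = 0 ∧ n < k)) := by
  have hk : 0 < N ^ k := by positivity
  have hn : 0 < N ^ n := by positivity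
  rcases lt_or_ge n k with h | h
  · have h1 : N ^ n < N ^ k := Nat.pow_lt_pow_right (by omega) h
    rcases Nat.eq_zero_or_pos r with rfl | hr
    · simp [h, hn]
    · have : N ^ k ≤ r * N ^ k := Nat.le_mul_of_pos_left _ hr
      omega
  · obtain ⟨d, rfl⟩ := Nat.exists_eq_add_of_le h
    have h3 : ¬ (k + d < k) := by omega
    have : (r * N ^ k < N ^ (k + d)) ↔ (r + 1) * N ^ k ≤ N ^ (k+d) := by
      rw [pow_add, mul_comm (N ^ k), Nat.mul_lt_mul_right hk, Nat.mul_le_mul_right_iff hk]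
      rfl
    have h4 : (r+1) * N ^ k = r * N ^ k + N ^ k := by ring
    omega

noncomputable def auxSingle {H : Type*} [NormedAddCommGroup H] [InnerProductSpace ℂ H]
    (m : ℕ) (X : H →L[ℂ] H) : BoundedContinuousFunction ℕ (H →L[ℂ] H) :=
  BoundedContinuousFunction.ofNormedAddCommGroup (fun n => if n = m then X else 0)
    continuous_of_discreteTopology ‖X‖ (by intro n; split_ifs <;> simp)

theorem auxSingle_apply {H : Type*} [NormedAddCommGroup H] [InnerProductSpace ℂ H]
    (m : ℕ) (X : H →L[ℂ] H) (n : ℕ) : auxSingle m X n = if n = m then X else 0 := rfl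


/-- `G_η ⊆ S_η(O_N)`: every bounded sequence `(A_n)` of operators with
`A_n = P_{N^n} A_n P_{N^n}` (i.e. an `N^n × N^n` matrix) and `‖A_n‖ → 0` belongs to the
smallest closed *-subalgebra of `F_η` containing all sequences `(P_{N^n} A P_{N^n})` with `A`
in the concrete Cuntz algebra `O_N`. -/
theorem stmt8 {H : Type*} [NormedAddCommGroup H] [InnerProductSpace ℂ H] [CompleteSpace H]
    (e : HilbertBasis ℕ ℂ H) (N : ℕ) (hN : 2 ≤ N)
    (S : Fin N → H →L[ℂ] H)
    (hS : ∀ (i : Fin N) (r : ℕ), S i (e r) = e (r * N + (i : ℕ)))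
    (P : ℕ → H →L[ℂ] H)
    (hP : ∀ n k : ℕ, P n (e k) = if k < n then e k else 0)
    (f : BoundedContinuousFunction ℕ (H →L[ℂ] H))
    (hf : ∀ n : ℕ, f n = P (N ^ n) * f n * P (N ^ n))
    (hf0 : Filter.Tendsto (fun n => ‖f n‖) Filter.atTop (nhds 0)) :
    f ∈ (NonUnitalStarAlgebra.adjoin ℂ
        {g : BoundedContinuousFunction ℕ (H →L[ℂ] H) |
          ∃ A ∈ (NonUnitalStarAlgebra.adjoin ℂ (Set.range S)).topologicalClosure,
            ∀ n : ℕ, g n = P (N ^ n) * A * P (N ^ n)}).topologicalClosure := by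
  set B := NonUnitalStarAlgebra.adjoin ℂ
        {g : BoundedContinuousFunction ℕ (H →L[ℂ] H) |
          ∃ A ∈ (NonUnitalStarAlgebra.adjoin ℂ (Set.range S)).topologicalClosure,
            ∀ n : ℕ, g n = P (N ^ n) * A * P (N ^ n)} with hB
  have hPn : ∀ n, ‖P n‖ ≤ 1 := fun n => aux_Pnorm e (P n) n (hP n)
  have hN0 : ∀ n, 0 < N ^ n := fun n => by positivity
  -- compressions of words
  have hD : ∀ k c, c < N ^ k → ∃ g ∈ B, ∀ n r, g n (e r) =
      if r < N ^ n ∧ r * N ^ k + c < N ^ n then e (r * N ^ k + c) else 0 := by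
    intro k c hc
    obtain ⟨V, hV, hV2⟩ := aux_V e N hN S hS k c hc
    refine ⟨BoundedContinuousFunction.ofNormedAddCommGroup
      (fun n => P (N ^ n) * V * P (N ^ n)) continuous_of_discreteTopology ‖V‖ ?_, ?_, ?_⟩
    · intro n
      calc ‖P (N ^ n) * V * P (N ^ n)‖ ≤ ‖P (N ^ n)‖ * ‖V‖ * ‖P (N ^ n)‖ := norm_mul₃_le
        _ ≤ 1 * ‖V‖ * 1 := by gcongr <;> exact hPn _
        _ = ‖V‖ := by ring
    · exact NonUnitalStarAlgebra.subset_adjoin ℂ _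
        ⟨V, NonUnitalStarSubalgebra.le_topologicalClosure _ hV, fun n => rfl⟩
    · intro n r
      change (P (N ^ n) * V * P (N ^ n)) (e r) = _
      rw [ContinuousLinearMap.mul_apply, ContinuousLinearMap.mul_apply, hP]
      by_cases h : r < N ^ n
      · simp [h, hV2, hP]
      · simp [h]
  have hT : ∀ k, ∃ g ∈ B, ∀ n r, g n (e r) = if r = 0 ∧ n < k then e r else 0 := by
    intro k
    obtain ⟨g, hg, hg2⟩ := hD k 0 (hN0 k)
    obtain ⟨g', hg', hg2'⟩ := hD k (N ^ k - 1) (Nat.sub_lt (hN0 k) one_pos)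
    refine ⟨star g * g - star g' * g', sub_mem (mul_mem (star_mem hg) hg)
      (mul_mem (star_mem hg') hg'), ?_⟩
    intro n r
    have inj : ∀ c, Function.Injective (fun r => r * N ^ k + c) := by
      intro c a b hab
      exact Nat.eq_of_mul_eq_mul_right (hN0 k) (Nat.add_right_cancel hab)
    change (star (g n) * g n - star (g' n) * g' n) (e r) = _
    rw [ContinuousLinearMap.sub_apply, aux_starmul e _ _ _ (inj _) (hg2 n),
      aux_starmul e _ _ _ (inj _) (hg2' n)]
    have h1 := aux_arith N n k r hN
    have h2 : ¬ ((r < N ^ n ∧ r * N ^ k + (N ^ k - 1) < N ^ n) ∧ (r = 0 ∧ n < k)) := by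
      rintro ⟨⟨_, h3⟩, rfl, h4⟩
      have : N ^ n < N ^ k := Nat.pow_lt_pow_right (by omega) h4
      omega
    by_cases c1 : (r < N ^ n ∧ r * N ^ k + (N ^ k - 1) < N ^ n)
    · have c2 : ¬ (r = 0 ∧ n < k) := fun h => h2 ⟨c1, h⟩
      rw [if_pos (h1.2 (Or.inl c1)), if_pos c1, if_neg c2, sub_self]
    · by_cases c2 : r = 0 ∧ n < k
      · rw [if_pos (h1.2 (Or.inr c2)), if_neg c1, if_pos c2, sub_zero]
      · rw [if_neg (fun h => (h1.1 h).elim c1 c2), if_neg c1, if_neg c2, sub_zero]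
  have hE : ∀ m, auxSingle m (rankOne ℂ (e 0) (e 0)) ∈ B := by
    intro m
    obtain ⟨g, hg, hg2⟩ := hT m
    obtain ⟨g', hg', hg2'⟩ := hT (m + 1)
    have : auxSingle m (rankOne ℂ (e 0) (e 0)) = g' - g := by
      refine BoundedContinuousFunction.ext fun n => aux_ext e fun r => ?_
      rw [BoundedContinuousFunction.sub_apply, ContinuousLinearMap.sub_apply, hg2, hg2',
        auxSingle_apply]
      rcases Nat.eq_zero_or_pos r with rfl | hr
      · rcases lt_trichotomy n m with h | h | h
        · simp [h, h.ne, Nat.lt_succ_of_lt h]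
        · simp [h, e.orthonormal.norm_eq_one]
        · simp [h.ne', not_lt.2 h.le, not_lt.2 (Nat.succ_le_of_lt h)]
      · have hc : ∀ q : Prop, ¬ (r = 0 ∧ q) := fun q h => hr.ne' h.1
        rw [if_neg (hc (n < m + 1)), if_neg (hc (n < m))]
        split_ifs
        · rw [rankOne_apply, aux_inner, if_neg hr.ne]
          simp
        · simp
    rw [this]
    exact sub_mem hg' hg
  have hU : ∀ m a b, a < N ^ m → b < N ^ m → auxSingle m (rankOne ℂ (e a) (e b)) ∈ B := by
    intro m a b ha hb
    obtain ⟨g, hg, hg2⟩ := hD m a ha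
    obtain ⟨g', hg', hg2'⟩ := hD m b hb
    have : auxSingle m (rankOne ℂ (e a) (e b)) =
        g * auxSingle m (rankOne ℂ (e 0) (e 0)) * star g' := by
      refine BoundedContinuousFunction.ext fun n => ?_
      change _ = g n * (auxSingle m (rankOne ℂ (e 0) (e 0)) n) * star (g' n)
      rw [auxSingle_apply, auxSingle_apply]
      split_ifs with h
      · subst h
        have h1 : g n (e 0) = e a := by rw [hg2]; simp [hN0, ha]
        have h2 : g' n (e 0) = e b := by rw [hg2']; simp [hN0, hb]
        ext x
        simp only [ContinuousLinearMap.mul_apply, rankOne_apply,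
          ContinuousLinearMap.star_eq_adjoint, ContinuousLinearMap.adjoint_inner_right, map_smul,
          h1, h2]
      · simp
    rw [this]
    exact mul_mem (mul_mem hg (hE m)) (star_mem hg')
  have hF : ∀ m, auxSingle m (f m) ∈ B := by
    intro m
    have : auxSingle m (f m) = ∑ a ∈ Finset.range (N ^ m), ∑ b ∈ Finset.range (N ^ m),
        (inner ℂ (e a) (f m (e b))) • auxSingle m (rankOne ℂ (e a) (e b)) := by
      refine BoundedContinuousFunction.ext fun n => ?_
      simp only [BoundedContinuousFunction.coe_sum, Finset.sum_apply,
        BoundedContinuousFunction.coe_smul, auxSingle_apply]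
      split_ifs with h
      · conv_lhs => rw [hf m, aux_P e _ _ (hP (N ^ m)), Finset.sum_mul, Finset.sum_mul]
        refine Finset.sum_congr rfl fun a _ => ?_
        rw [Finset.mul_sum]
        refine Finset.sum_congr rfl fun b _ => ?_
        ext x
        simp [smul_smul, mul_comm]
      · simp
    rw [this]
    refine sum_mem fun a ha => sum_mem fun b hb => SMulMemClass.smul_mem _ ?_
    exact hU m a b (Finset.mem_range.1 ha) (Finset.mem_range.1 hb)
  change f ∈ closure (B : Set (BoundedContinuousFunction ℕ (H →L[ℂ] H)))
  rw [Metric.mem_closure_iff]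
  intro ε hε
  obtain ⟨M, hM⟩ := Filter.eventually_atTop.1 (hf0.eventually (gt_mem_nhds (half_pos hε)))
  refine ⟨∑ m ∈ Finset.range M, auxSingle m (f m), sum_mem fun m _ => hF m, ?_⟩
  refine lt_of_le_of_lt ?_ (half_lt_self hε)
  rw [BoundedContinuousFunction.dist_le (half_pos hε).le]
  intro n
  simp only [BoundedContinuousFunction.coe_sum, Finset.sum_apply, auxSingle_apply,
    Finset.sum_ite_eq, Finset.mem_range]
  split_ifs with h
  · simpa using (half_pos hε).le
  · rw [dist_zero_right]
    exact (hM n (not_lt.1 h)).le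
end
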